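/- Let b̄ ∈ dom F and x̄ ∈ F(b̄) with f_{b̄}(x̄) = 0, and assume the regularity condition holds at x̄: there is a neighborhood W of x̄ such that F(b̄) ∩ W = (x̄ + A(x̄)°) ∩ W. Then clm F(b̄,x̄) = d_*(0ₙ, end conv{a_t : t ∈ T(x̄)})⁻¹ = sup_{D ∈ D(x̄)} d_*(0ₙ, conv{a_t : t ∈ D})⁻¹, where conv{a_t : t ∈ T(x̄)} equals the convex subdifferential ∂f_{b̄}(x̄), and D(x̄) is the family of subsets D ⊆ T(x̄) such that the system { a_t'd = 1 for t ∈ D, a_t'd < 1 for t ∈ T(x̄) \ D } has a solution d ∈ ℝⁿ. -/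

import Mathlib

open Filter Set EMetric
open scoped Topology ENNReal NNReal

/-- The feasible set `F(b) = {x ∈ ℝⁿ : aₜ'x ≤ bₜ for all t ∈ T}`. -/
def feas {n : ℕ} {T : Type*} [TopologicalSpace T]
    (a : T → (Fin n → ℝ)) (b : C(T, ℝ)) : Set (Fin n → ℝ) :=
  {x | ∀ t : T, (∑ i, a t i * x i) ≤ b t}

/-- Distance (in `[0,+∞]`, with `d(z,∅) = +∞`) from `z` to `S ⊆ ℝⁿ` with respect to the
norm `p` on `ℝⁿ`. -/
noncomputable def pDist {n : ℕ} (p : Seminorm ℝ (Fin n → ℝ))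
    (z : Fin n → ℝ) (S : Set (Fin n → ℝ)) : ℝ≥0∞ :=
  ⨅ s ∈ S, ENNReal.ofReal (p (z - s))

/-- The dual norm `‖u‖_* = sup_{p(x) ≤ 1} |u'x|` of `u ∈ ℝⁿ`, valued in `[0,+∞]`. -/
noncomputable def dualNorm {n : ℕ} (p : Seminorm ℝ (Fin n → ℝ)) (u : Fin n → ℝ) : ℝ≥0∞ :=
  ⨆ (x : Fin n → ℝ) (_ : p x ≤ 1), ENNReal.ofReal |∑ i, u i * x i|

/-- The dual distance `d_*(0ₙ, S) = inf_{u ∈ S} ‖u‖_*`, valued in `[0,+∞]`. -/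
noncomputable def dualDist0 {n : ℕ} (p : Seminorm ℝ (Fin n → ℝ)) (S : Set (Fin n → ℝ)) : ℝ≥0∞ :=
  ⨅ u ∈ S, dualNorm p u

/-- The supremum function `f_b(x) = sup_{t ∈ T} (a_t'x − b_t)`. -/
noncomputable def fSup {n : ℕ} {T : Type*} [TopologicalSpace T]
    (a : T → (Fin n → ℝ)) (b : C(T, ℝ)) (x : Fin n → ℝ) : ℝ :=
  ⨆ t : T, ((∑ i, a t i * x i) - b t)

/-- The set of active indices `T(x) = {t ∈ T : a_t'x = b̄_t}` at a point `x`. -/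
def activeIdx {n : ℕ} {T : Type*} [TopologicalSpace T]
    (a : T → (Fin n → ℝ)) (bbar : C(T, ℝ)) (x : Fin n → ℝ) : Set T :=
  {t : T | (∑ i, a t i * x i) = bbar t}

/-- The convex conical hull `cone S` (containing `0ₙ`). -/
def coneHull {n : ℕ} (S : Set (Fin n → ℝ)) : Set (Fin n → ℝ) :=
  insert 0 {x | ∃ c : ℝ, 0 ≤ c ∧ ∃ y ∈ convexHull ℝ S, x = c • y}

/-- The negative polar `K° = {u : k'u ≤ 0 for all k ∈ K}`. -/
def negPolar {n : ℕ} (K : Set (Fin n → ℝ)) : Set (Fin n → ℝ) :=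
  {u | ∀ k ∈ K, (∑ i, k i * u i) ≤ 0}

/-- The end set of a convex set `C ⊆ ℝⁿ`:
`end C = {u ∈ cl C : no μ > 1 satisfies μ·u ∈ cl C}`. -/
def endSet {n : ℕ} (C : Set (Fin n → ℝ)) : Set (Fin n → ℝ) :=
  {u ∈ closure C | ¬ ∃ μ : ℝ, 1 < μ ∧ μ • u ∈ closure C}

/-- The family `D(x)` of subsets `D ⊆ T(x)` such that the system
`{a_t'd = 1 (t ∈ D), a_t'd < 1 (t ∈ T(x) \ D)}` is consistent in `d ∈ ℝⁿ`. -/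
def Dfam {n : ℕ} {T : Type*} [TopologicalSpace T]
    (a : T → (Fin n → ℝ)) (bbar : C(T, ℝ)) (x : Fin n → ℝ) : Set (Set T) :=
  {D | D ⊆ activeIdx a bbar x ∧ ∃ d : Fin n → ℝ,
      (∀ t ∈ D, (∑ i, a t i * d i) = 1) ∧
      (∀ t ∈ activeIdx a bbar x \ D, (∑ i, a t i * d i) < 1)}

/-- The calmness modulus of `F` at `(b̄, x̄)`:
`clm F(b̄,x̄) = limsup_{(b,x) → (b̄,x̄), x ∈ F(b)} d(x, F(b̄)) / ‖b − b̄‖_∞`. -/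
noncomputable def clmF {n : ℕ} {T : Type*} [TopologicalSpace T] [CompactSpace T]
    (a : T → (Fin n → ℝ)) (p : Seminorm ℝ (Fin n → ℝ))
    (bbar : C(T, ℝ)) (xbar : Fin n → ℝ) : ℝ≥0∞ :=
  Filter.limsup
    (fun q : C(T, ℝ) × (Fin n → ℝ) => pDist p q.2 (feas a bbar) / edist q.1 bbar)
    (𝓝 (bbar, xbar) ⊓ 𝓟 {q : C(T, ℝ) × (Fin n → ℝ) | q.2 ∈ feas a q.1})

/-!
Write `S = {aₜ : t ∈ T(x̄)}` and `K = {d : u'd ≤ 0 for all u ∈ S}`. The theorem is the cycle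
`clm F ≤ sup_D d_*(0, conv a(D))⁻¹ ≤ d_*(0, end conv S)⁻¹ ≤ clm F`.

* By regularity, `F(b̄)` may be replaced near `x̄` by `x̄ + K`, so the first inequality is a global
  error bound for the sublinear system defining `K`. If every `conv a(D)` has dual distance more
  than `τ` from the origin, then at each `x ∉ K` Hahn–Banach separates the dual ball of radius `τ`
  from the convex hull of the most violated constraints, which gives a direction along which the
  largest violation decreases faster than `τ p` grows. Hence a minimizer of the largest violation
  plus `τ p(d - ·)` lies in `K`.
* If `d` solves the system defining `D`, the hyperplane `{u : u'd = 1}` supports `conv S` and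
  contains `conv a(D)`, so no point of `conv a(D)` can be scaled up inside `conv S`.
* If `u ∈ end conv S` and `μ > 1`, separating `μu` from `conv S` gives `d` with `u'd = 1` and
  `v'd < μ` on `S`. Moving from `x̄` by `εd` while raising `b̄` by `εμ` keeps the point feasible,
  whereas `u'(y - x̄) ≤ 0` on `F(b̄)` forces its distance to `F(b̄)` to be at least `ε / ‖u‖_*`.
-/

section FirstOrder

variable {X : Type*} [TopologicalSpace X]

theorem eventually_forall_add_mul_le {A : Set X} (hA : IsCompact A) {g h : X → ℝ}
    (hg : Continuous g) (hh : Continuous h) {s : ℝ} (hg_nonpos : ∀ t ∈ A, g t ≤ 0)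
    (hs : ∀ t ∈ A, g t = 0 → h t < s) :
    ∀ᶠ ε : ℝ in 𝓝[>] 0, ∀ t ∈ A, g t + ε * h t ≤ ε * s := by
  have hlocal : ∀ᶠ ε : ℝ in 𝓝 0, ∀ t ∈ A, 0 < ε → g t ≤ 0 → g t + ε * h t ≤ ε * s := by
    refine hA.eventually_forall_of_forall_eventually fun t ht => ?_
    rcases (hg_nonpos t ht).eq_or_lt with hgt | hgt
    · have hlt : ∀ᶠ q : ℝ × X in 𝓝 (0, t), h q.2 < s :=
        (hh.comp continuous_snd).tendsto (0, t) |>.eventually_lt_const (hs t ht hgt)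
      filter_upwards [hlt] with q hq hε hgq
      nlinarith
    · have hcont : Continuous fun q : ℝ × X => g q.2 + q.1 * h q.2 - q.1 * s := by fun_prop
      have hlt : ∀ᶠ q : ℝ × X in 𝓝 (0, t), g q.2 + q.1 * h q.2 - q.1 * s < 0 :=
        (hcont.tendsto (0, t)).eventually_lt_const (by simpa using hgt)
      filter_upwards [hlt] with q hq _ _
      linarith
  filter_upwards [nhdsWithin_le_nhds hlocal, self_mem_nhdsWithin] with ε h_all hε t ht
  exact h_all t ht hε (hg_nonpos t ht)

end FirstOrder

section Seminorm

variable {E : Type*} [NormedAddCommGroup E] [NormedSpace ℝ E] [FiniteDimensional ℝ E]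
  {p : Seminorm ℝ E}

theorem continuous_seminorm_of_finiteDimensional (p : Seminorm ℝ E) : Continuous p :=
  p.convexOn.locallyLipschitz.continuous

theorem exists_pos_mul_norm_le_seminorm (hp : ∀ x, p x = 0 → x = 0) :
    ∃ m > 0, ∀ x, m * ‖x‖ ≤ p x := by
  obtain ⟨m, hm, hle⟩ := (isCompact_sphere (0 : E) 1).exists_forall_le'
    (continuous_seminorm_of_finiteDimensional p).continuousOn (a := 0) fun y hy =>
      (apply_nonneg p y).lt_of_ne' fun h => by simp [hp y h] at hy
  refine ⟨m, hm, fun x => ?_⟩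
  rcases eq_or_ne x 0 with rfl | hx
  · simp
  · have hx_pos : 0 < ‖x‖ := norm_pos_iff.2 hx
    have hunit : m ≤ p (‖x‖⁻¹ • x) := hle _ (by simp [norm_smul, hx_pos.ne'])
    rwa [map_smul_eq_mul, norm_inv, norm_norm, inv_mul_eq_div, le_div_iff₀ hx_pos] at hunit

theorem hasBasis_nhds_seminorm_ball (hp : ∀ x, p x = 0 → x = 0) (x : E) :
    (𝓝 x).HasBasis (fun r : ℝ => 0 < r) (p.ball x) := by
  refine ⟨fun W => ⟨fun hW => ?_, fun ⟨r, hr, hrW⟩ => ?_⟩⟩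
  · obtain ⟨m, hm, hle⟩ := exists_pos_mul_norm_le_seminorm hp
    obtain ⟨ρ, hρ, hρW⟩ := Metric.mem_nhds_iff.1 hW
    refine ⟨m * ρ, mul_pos hm hρ, fun y hy => hρW ?_⟩
    rw [mem_ball_iff_norm]
    exact lt_of_mul_lt_mul_left ((hle _).trans_lt (p.mem_ball.1 hy)) hm.le
  · have hcont : Continuous fun y => p (y - x) :=
      (continuous_seminorm_of_finiteDimensional p).comp (continuous_id.sub continuous_const)
    exact mem_of_superset ((isOpen_lt hcont continuous_const).mem_nhds (by simpa using hr)) hrW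

theorem exists_eq_zero_and_mul_seminorm_sub_le (hp : ∀ x, p x = 0 → x = 0) {g : E → ℝ}
    (hg : Continuous g) (hg_nonneg : ∀ x, 0 ≤ g x) {τ : ℝ} (hτ : 0 < τ)
    (hdescent : ∀ x, 0 < g x → ∃ y, g y + τ * p (x - y) < g x) (d : E) :
    ∃ k, g k = 0 ∧ τ * p (d - k) ≤ g d := by
  have hcont : Continuous fun x => g x + τ * p (d - x) :=
    hg.add (continuous_const.mul ((continuous_seminorm_of_finiteDimensional p).comp
      (continuous_const.sub continuous_id)))
  have hcoercive : Tendsto (fun x => g x + τ * p (d - x)) (cocompact E) atTop := by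
    obtain ⟨m, hm, hle⟩ := exists_pos_mul_norm_le_seminorm hp
    refine tendsto_atTop_mono (f := fun x => τ * (m * (‖x‖ - ‖d‖))) (fun x => ?_) ?_
    · have hnorm : m * (‖x‖ - ‖d‖) ≤ p (d - x) :=
        (mul_le_mul_of_nonneg_left (norm_sub_norm_le x d) hm.le).trans
          (norm_sub_rev x d ▸ hle (d - x))
      nlinarith [hg_nonneg x]
    · exact ((tendsto_atTop_add_const_right _ _ tendsto_norm_cocompact_atTop).const_mul_atTop
        hm).const_mul_atTop hτ
  obtain ⟨k, hk⟩ := hcont.exists_forall_le hcoercive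
  refine ⟨k, (hg_nonneg k).antisymm' (not_lt.1 fun hgk => ?_), ?_⟩
  · obtain ⟨y, hy⟩ := hdescent k hgk
    have htriangle : p (d - y) ≤ p (d - k) + p (k - y) := by
      simpa using map_add_le_add p (d - k) (k - y)
    nlinarith [hk y]
  · have hkd : g k + τ * p (d - k) ≤ g d := by simpa using hk d
    linarith [hg_nonneg k]

end Seminorm

section DotProduct

variable {ι : Type*} [Fintype ι]

theorem exists_forall_eq_dotProduct (f : Module.Dual ℝ (ι → ℝ)) : ∃ d, ∀ x, f x = x ⬝ᵥ d := by
  classical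
  obtain ⟨d, rfl⟩ := (dotProductEquiv ℝ ι).surjective f
  exact ⟨d, fun x => dotProduct_comm d x⟩

theorem isLinearMap_dotProduct_right (d : ι → ℝ) : IsLinearMap ℝ fun u : ι → ℝ => u ⬝ᵥ d :=
  ⟨fun u v => add_dotProduct u v d, fun c u => smul_dotProduct c u d⟩

theorem isClosed_setOf_dotProduct_le (d : ι → ℝ) (c : ℝ) : IsClosed {u : ι → ℝ | u ⬝ᵥ d ≤ c} :=
  isClosed_le (continuous_id.dotProduct continuous_const) continuous_const

theorem dotProduct_le_of_mem_closure_convexHull {S : Set (ι → ℝ)} {d u : ι → ℝ} {c : ℝ}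
    (hS : ∀ v ∈ S, v ⬝ᵥ d ≤ c) (hu : u ∈ closure (convexHull ℝ S)) : u ⬝ᵥ d ≤ c :=
  closure_minimal (convexHull_min hS (convex_halfSpace_le (isLinearMap_dotProduct_right d) c))
    (isClosed_setOf_dotProduct_le d c) hu

theorem abs_dotProduct_le_card_mul_norm_mul_norm (u x : ι → ℝ) :
    |u ⬝ᵥ x| ≤ Fintype.card ι * (‖u‖ * ‖x‖) :=
  calc |u ⬝ᵥ x| ≤ ∑ i, |u i * x i| := Finset.abs_sum_le_sum_abs _ _
    _ ≤ ∑ _i : ι, ‖u‖ * ‖x‖ := by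
      gcongr with i
      rw [abs_mul]
      exact mul_le_mul (norm_le_pi_norm u i) (norm_le_pi_norm x i) (abs_nonneg _) (norm_nonneg _)
    _ = Fintype.card ι * (‖u‖ * ‖x‖) := by simp

theorem exists_dotProduct_eq_seminorm (p : Seminorm ℝ (ι → ℝ)) (z : ι → ℝ) :
    ∃ w, w ⬝ᵥ z = p z ∧ ∀ y, w ⬝ᵥ y ≤ p y := by
  rcases eq_or_ne z 0 with rfl | hz
  · exact ⟨0, by simp, fun y => by simp⟩
  obtain ⟨g, hg, hgp⟩ := Module.Dual.exists_extension_of_le_seminorm_real _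
    (LinearPMap.mkSpanSingleton (K := ℝ) z (p z) hz).toFun (p := p) (by
      rintro ⟨x, hx⟩
      obtain ⟨c, rfl⟩ := Submodule.mem_span_singleton.1 hx
      refine (LinearPMap.mkSpanSingleton'_apply ..).trans_le ?_
      rw [map_smul_eq_mul]
      exact mul_le_mul_of_nonneg_right (le_abs_self c) (apply_nonneg p z))
  obtain ⟨w, hw⟩ := exists_forall_eq_dotProduct g
  refine ⟨w, ?_, fun y => ?_⟩
  · rw [dotProduct_comm, ← hw]
    exact (hg ⟨z, Submodule.mem_span_singleton_self z⟩).trans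
      (LinearPMap.mkSpanSingleton_apply ℝ ℝ hz _)
  · rw [dotProduct_comm, ← hw]
    exact (le_abs_self _).trans (hgp y)

end DotProduct

section DualNorm

variable {n : ℕ} {p : Seminorm ℝ (Fin n → ℝ)} {u : Fin n → ℝ}

theorem dualNorm_le_ofReal {τ : ℝ} (hτ : 0 ≤ τ) (hu : ∀ y, u ⬝ᵥ y ≤ τ * p y) :
    dualNorm p u ≤ ENNReal.ofReal τ := by
  refine iSup₂_le fun x hx => ENNReal.ofReal_le_ofReal (abs_le'.2 ⟨?_, ?_⟩)
  · exact (hu x).trans (mul_le_of_le_one_right hτ hx)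
  · rw [← map_neg_eq_map] at hx
    exact (dotProduct_neg u x).symm.trans_le ((hu (-x)).trans (mul_le_of_le_one_right hτ hx))

theorem ofReal_abs_dotProduct_le_dualNorm {x : Fin n → ℝ} (hx : p x ≤ 1) :
    ENNReal.ofReal |u ⬝ᵥ x| ≤ dualNorm p u :=
  le_iSup₂ (f := fun (x : Fin n → ℝ) (_ : p x ≤ 1) => ENNReal.ofReal |u ⬝ᵥ x|) x hx

theorem ofReal_dotProduct_div_dualNorm_le (u y : Fin n → ℝ) :
    ENNReal.ofReal (u ⬝ᵥ y) / dualNorm p u ≤ ENNReal.ofReal (p y) := by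
  have hgt : ∀ r > p y, ENNReal.ofReal (u ⬝ᵥ y) / dualNorm p u ≤ ENNReal.ofReal r := by
    intro r hr
    have hr_pos : 0 < r := (apply_nonneg p y).trans_lt hr
    have hunit : p (r⁻¹ • y) ≤ 1 := by
      rw [map_smul_eq_mul, norm_inv, Real.norm_of_nonneg hr_pos.le, inv_mul_le_one₀ hr_pos]
      exact hr.le
    refine ENNReal.div_le_of_le_mul ?_
    calc ENNReal.ofReal (u ⬝ᵥ y) ≤ ENNReal.ofReal (r * |u ⬝ᵥ (r⁻¹ • y)|) := by
          rw [dotProduct_smul, smul_eq_mul, abs_mul, abs_inv, abs_of_pos hr_pos,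
            mul_inv_cancel_left₀ hr_pos.ne']
          exact ENNReal.ofReal_le_ofReal (le_abs_self _)
      _ = ENNReal.ofReal r * ENNReal.ofReal |u ⬝ᵥ (r⁻¹ • y)| := ENNReal.ofReal_mul hr_pos.le
      _ ≤ ENNReal.ofReal r * dualNorm p u := by
          gcongr
          exact ofReal_abs_dotProduct_le_dualNorm hunit
  have hlim : Tendsto ENNReal.ofReal (𝓝[>] p y) (𝓝 (ENNReal.ofReal (p y))) :=
    ENNReal.tendsto_ofReal (tendsto_id.mono_left nhdsWithin_le_nhds)
  exact ge_of_tendsto hlim (eventually_mem_nhdsWithin.mono hgt)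

theorem dualNorm_add_le (u v : Fin n → ℝ) : dualNorm p (u + v) ≤ dualNorm p u + dualNorm p v :=
  iSup₂_le fun x hx =>
    calc ENNReal.ofReal |(u + v) ⬝ᵥ x|
        ≤ ENNReal.ofReal (|u ⬝ᵥ x| + |v ⬝ᵥ x|) := by
          rw [add_dotProduct]
          exact ENNReal.ofReal_le_ofReal (abs_add_le _ _)
      _ ≤ ENNReal.ofReal |u ⬝ᵥ x| + ENNReal.ofReal |v ⬝ᵥ x| := ENNReal.ofReal_add_le
      _ ≤ dualNorm p u + dualNorm p v :=
          add_le_add (ofReal_abs_dotProduct_le_dualNorm hx) (ofReal_abs_dotProduct_le_dualNorm hx)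

theorem exists_dualNorm_le_mul_enorm (hp : ∀ x, p x = 0 → x = 0) :
    ∃ C : ℝ≥0, ∀ u, dualNorm p u ≤ C * ‖u‖ₑ := by
  obtain ⟨m, hm, hle⟩ := exists_pos_mul_norm_le_seminorm hp
  refine ⟨(n * m⁻¹).toNNReal, fun u => iSup₂_le fun x hx => ?_⟩
  have hx_norm : ‖x‖ ≤ m⁻¹ := (le_inv_mul_iff₀ hm).2 ((hle x).trans hx) |>.trans_eq (mul_one _)
  rw [← ofReal_norm, ← ENNReal.ofReal.eq_def, ← ENNReal.ofReal_mul (by positivity)]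
  refine ENNReal.ofReal_le_ofReal ?_
  calc |u ⬝ᵥ x| ≤ n * (‖u‖ * ‖x‖) := by
        simpa using abs_dotProduct_le_card_mul_norm_mul_norm u x
    _ ≤ n * (‖u‖ * m⁻¹) := by gcongr
    _ = n * m⁻¹ * ‖u‖ := by ring

theorem continuous_dualNorm (hp : ∀ x, p x = 0 → x = 0) : Continuous (dualNorm p) := by
  obtain ⟨C, hC⟩ := exists_dualNorm_le_mul_enorm hp
  refine continuous_of_le_add_edist C ENNReal.coe_ne_top fun u v => ?_
  calc dualNorm p u = dualNorm p (v + (u - v)) := by rw [add_sub_cancel]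
    _ ≤ dualNorm p v + dualNorm p (u - v) := dualNorm_add_le _ _
    _ ≤ dualNorm p v + C * edist u v := by
        rw [edist_eq_enorm_sub]
        gcongr
        exact hC _

theorem dualDist0_closure (hp : ∀ x, p x = 0 → x = 0) (Q : Set (Fin n → ℝ)) :
    dualDist0 p (closure Q) = dualDist0 p Q := by
  have hclosed : IsClosed {v | dualDist0 p Q ≤ dualNorm p v} :=
    isClosed_le continuous_const (continuous_dualNorm hp)
  have hsub : Q ⊆ {v | dualDist0 p Q ≤ dualNorm p v} :=
    fun v hv => iInf₂_le (f := fun u _ => dualNorm p u) v hv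
  exact (biInf_mono subset_closure).antisymm <| le_iInf₂ fun _ hu =>
    closure_minimal hsub hclosed hu

theorem exists_dotProduct_lt_of_lt_dualDist0 (hp : ∀ x, p x = 0 → x = 0) {Q : Set (Fin n → ℝ)}
    (hQ : Convex ℝ Q) (hQ_bdd : Bornology.IsBounded Q) {τ : ℝ} (hτ : 0 ≤ τ)
    (hdist : ENNReal.ofReal τ < dualDist0 p Q) :
    ∃ (z : Fin n → ℝ) (s : ℝ), (∀ u ∈ Q, u ⬝ᵥ z < s) ∧ s + τ * p z < 0 := by
  set B : Set (Fin n → ℝ) := ⋂ y, {w | w ⬝ᵥ y ≤ τ * p y}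
  have hB_convex : Convex ℝ B :=
    convex_iInter fun y => convex_halfSpace_le (isLinearMap_dotProduct_right y) _
  have hB_closed : IsClosed B := isClosed_iInter fun y => isClosed_setOf_dotProduct_le y _
  have hdisjoint : Disjoint (closure Q) B := disjoint_left.2 fun w hwQ hwB => by
    rw [← dualDist0_closure hp] at hdist
    exact hdist.not_ge ((iInf₂_le w hwQ).trans (dualNorm_le_ofReal hτ (mem_iInter.1 hwB)))
  obtain ⟨f, s, v, hfs, hsv, hvf⟩ := geometric_hahn_banach_compact_closed hQ.closure
    hQ_bdd.isCompact_closure hB_convex hB_closed hdisjoint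
  obtain ⟨z, hz : ∀ x, f x = x ⬝ᵥ z⟩ := exists_forall_eq_dotProduct f.toLinearMap
  simp only [hz] at hfs hvf
  obtain ⟨w, hwz, hw⟩ := exists_dotProduct_eq_seminorm p (-z)
  have hwB : τ • w ∈ B := mem_iInter.2 fun y => by
    simpa using mul_le_mul_of_nonneg_left (hw y) hτ
  have hv : v < (τ • w) ⬝ᵥ z := hvf _ hwB
  rw [dotProduct_neg, map_neg_eq_map, neg_eq_iff_eq_neg] at hwz
  rw [smul_dotProduct, hwz, smul_eq_mul] at hv
  exact ⟨z, s, fun u hu => hfs u (subset_closure hu), by linarith⟩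

end DualNorm

section MaxViolation

variable {ι : Type*} [Fintype ι] {S : Set (ι → ℝ)}

/-- The largest violation at `x` of the homogeneous system `u'x ≤ 0`, `u ∈ S`: the support function
of `S ∪ {0}`, equivalently the positive part of the support function of `S`. Adjoining `0` makes it
nonnegative also for empty `S`. -/
noncomputable def maxViolation (S : Set (ι → ℝ)) (x : ι → ℝ) : ℝ :=
  sSup ((fun u => u ⬝ᵥ x) '' insert 0 S)

theorem continuous_maxViolation (hS : IsCompact S) : Continuous (maxViolation S) :=
  (hS.insert 0).continuous_sSup (f := fun x u => u ⬝ᵥ x)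
    (continuous_snd.dotProduct continuous_fst)

theorem isLUB_maxViolation (hS : IsCompact S) (x : ι → ℝ) :
    IsLUB ((fun u => u ⬝ᵥ x) '' insert 0 S) (maxViolation S x) :=
  isLUB_csSup ((insert_nonempty 0 S).image _)
    ((hS.insert 0).image (continuous_id.dotProduct continuous_const)).bddAbove

theorem maxViolation_nonneg (hS : IsCompact S) (x : ι → ℝ) : 0 ≤ maxViolation S x :=
  (isLUB_maxViolation hS x).1 ⟨0, mem_insert 0 S, zero_dotProduct x⟩

theorem dotProduct_le_maxViolation (hS : IsCompact S) {u : ι → ℝ} (hu : u ∈ S) (x : ι → ℝ) :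
    u ⬝ᵥ x ≤ maxViolation S x :=
  (isLUB_maxViolation hS x).1 ⟨u, mem_insert_of_mem 0 hu, rfl⟩

theorem maxViolation_le (hS : IsCompact S) {x : ι → ℝ} {c : ℝ} (hc : 0 ≤ c)
    (hle : ∀ u ∈ S, u ⬝ᵥ x ≤ c) : maxViolation S x ≤ c := by
  refine (isLUB_maxViolation hS x).2 ?_
  rintro _ ⟨u, rfl | hu, rfl⟩
  · exact (zero_dotProduct x).trans_le hc
  · exact hle u hu

end MaxViolation

section ErrorBound

variable {n : ℕ} {p : Seminorm ℝ (Fin n → ℝ)} {S : Set (Fin n → ℝ)}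

theorem exists_maxViolation_add_mul_lt (hp : ∀ x, p x = 0 → x = 0) (hS : IsCompact S) {τ : ℝ}
    (hτ : 0 ≤ τ) {x : Fin n → ℝ} (hx : 0 < maxViolation S x)
    (hdist : ENNReal.ofReal τ < dualDist0 p (convexHull ℝ {u ∈ S | u ⬝ᵥ x = maxViolation S x})) :
    ∃ y, maxViolation S y + τ * p (x - y) < maxViolation S x := by
  obtain ⟨z, s, hzs, hs⟩ := exists_dotProduct_lt_of_lt_dualDist0 hp (convex_convexHull ℝ _)
    (isBounded_convexHull.2 (hS.isBounded.subset (sep_subset _ _))) hτ hdist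
  have hfirst : ∀ᶠ ε : ℝ in 𝓝[>] 0, ∀ u ∈ S, (u ⬝ᵥ x - maxViolation S x) + ε * (u ⬝ᵥ z) ≤ ε * s :=
    eventually_forall_add_mul_le hS
      ((continuous_id.dotProduct continuous_const).sub continuous_const)
      (continuous_id.dotProduct continuous_const)
      (fun u hu => sub_nonpos.2 (dotProduct_le_maxViolation hS hu x))
      (fun u hu hux => hzs u (subset_convexHull ℝ _ ⟨hu, sub_eq_zero.1 hux⟩))
  have hpos : ∀ᶠ ε : ℝ in 𝓝[>] 0, 0 < maxViolation S x + ε * s :=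
    ((by fun_prop : Continuous fun ε : ℝ => maxViolation S x + ε * s).tendsto 0 |>.mono_left
      nhdsWithin_le_nhds).eventually_const_lt (by simpa using hx)
  obtain ⟨ε, hε_first, hε_pos, hε : 0 < ε⟩ :=
    (hfirst.and (hpos.and self_mem_nhdsWithin)).exists
  have hres : maxViolation S (x + ε • z) ≤ maxViolation S x + ε * s :=
    maxViolation_le hS hε_pos.le fun u hu => by
      rw [dotProduct_add, dotProduct_smul, smul_eq_mul]
      linarith [hε_first u hu]
  have hstep : p (x - (x + ε • z)) = ε * p z := by
    rw [sub_add_cancel_left, map_neg_eq_map, map_smul_eq_mul, Real.norm_of_nonneg hε.le]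
  refine ⟨x + ε • z, ?_⟩
  rw [hstep]
  nlinarith

theorem exists_forall_dotProduct_nonpos_and_mul_le (hp : ∀ x, p x = 0 → x = 0) (hS : IsCompact S)
    {τ : ℝ} (hτ : 0 < τ)
    (hface : ∀ e : Fin n → ℝ, (∀ u ∈ S, u ⬝ᵥ e ≤ 1) →
      ENNReal.ofReal τ < dualDist0 p (convexHull ℝ {u ∈ S | u ⬝ᵥ e = 1})) (d : Fin n → ℝ) :
    ∃ k, (∀ u ∈ S, u ⬝ᵥ k ≤ 0) ∧ τ * p (d - k) ≤ maxViolation S d := by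
  have hdescent : ∀ x, 0 < maxViolation S x →
      ∃ y, maxViolation S y + τ * p (x - y) < maxViolation S x := by
    refine fun x hx => exists_maxViolation_add_mul_lt hp hS hτ.le hx ?_
    have hscale (u : Fin n → ℝ) :
        u ⬝ᵥ ((maxViolation S x)⁻¹ • x) = (u ⬝ᵥ x) / maxViolation S x := by
      rw [dotProduct_smul, smul_eq_mul, inv_mul_eq_div]
    have h := hface ((maxViolation S x)⁻¹ • x) fun u hu => by
      rw [hscale, div_le_one hx]
      exact dotProduct_le_maxViolation hS hu x
    simpa only [hscale, div_eq_one_iff_eq hx.ne'] using h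
  obtain ⟨k, hk, hkd⟩ := exists_eq_zero_and_mul_seminorm_sub_le hp (continuous_maxViolation hS)
    (maxViolation_nonneg hS) hτ hdescent d
  exact ⟨k, fun u hu => (dotProduct_le_maxViolation hS hu k).trans_eq hk, hkd⟩

theorem mem_negPolar_coneHull {d : Fin n → ℝ} :
    d ∈ negPolar (coneHull S) ↔ ∀ u ∈ S, u ⬝ᵥ d ≤ 0 := by
  refine ⟨fun hd u hu => hd u (Or.inr ⟨1, zero_le_one, u, subset_convexHull ℝ S hu,
    (one_smul ℝ u).symm⟩), ?_⟩
  rintro hd _ (rfl | ⟨c, hc, u, hu, rfl⟩)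
  · exact (zero_dotProduct d).le
  · have hud : u ⬝ᵥ d ≤ 0 := dotProduct_le_of_mem_closure_convexHull hd (subset_closure hu)
    exact (smul_dotProduct c u d).trans_le (mul_nonpos_of_nonneg_of_nonpos hc hud)

theorem eventually_pDist_le_pDist_sub (hp : ∀ x, p x = 0 → x = 0) {K : Set (Fin n → ℝ)}
    {xbar : Fin n → ℝ} (hxbar : xbar ∈ S) (hK : ∀ᶠ x in 𝓝 xbar, x - xbar ∈ K → x ∈ S) :
    ∀ᶠ x in 𝓝 xbar, pDist p x S ≤ pDist p (x - xbar) K := by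
  obtain ⟨r, hr, hrK⟩ := (hasBasis_nhds_seminorm_ball hp xbar).mem_iff.1 hK
  filter_upwards [(hasBasis_nhds_seminorm_ball hp xbar).mem_of_mem (half_pos hr)] with x hx
  rw [p.mem_ball] at hx
  refine le_iInf₂ fun k hk => ?_
  rcases lt_or_ge (p k) r with hkr | hkr
  · have hmem : xbar + k ∈ S :=
      hrK (p.mem_ball.2 (by rwa [add_sub_cancel_left])) (by rwa [add_sub_cancel_left])
    exact (iInf₂_le _ hmem).trans_eq (by rw [sub_sub])
  · refine (iInf₂_le _ hxbar).trans (ENNReal.ofReal_le_ofReal ?_)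
    have htriangle : p k ≤ p (x - xbar) + p (x - xbar - k) := by
      simpa using map_sub_le_add p (x - xbar) (x - xbar - k)
    linarith

end ErrorBound

section EndSet

variable {n : ℕ} {C : Set (Fin n → ℝ)} {u : Fin n → ℝ}

theorem mem_endSet_of_dotProduct_eq_one {d : Fin n → ℝ} (hC : ∀ v ∈ closure C, v ⬝ᵥ d ≤ 1)
    (hu : u ∈ closure C) (hud : u ⬝ᵥ d = 1) : u ∈ endSet C := by
  refine ⟨hu, fun ⟨μ, hμ, hμu⟩ => ?_⟩
  have hle := hC _ hμu
  rw [smul_dotProduct, hud, smul_eq_mul, mul_one] at hle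
  exact hle.not_gt hμ

theorem exists_dotProduct_eq_one_of_mem_endSet (hC : Convex ℝ C) (hu : u ∈ endSet C) {μ : ℝ}
    (hμ : 1 < μ) : ∃ d, u ⬝ᵥ d = 1 ∧ ∀ v ∈ C, v ⬝ᵥ d < μ := by
  obtain ⟨f, s, hfs, hsf⟩ := geometric_hahn_banach_closed_point hC.closure isClosed_closure
    fun h => hu.2 ⟨μ, hμ, h⟩
  obtain ⟨d, hd : ∀ x, f x = x ⬝ᵥ d⟩ := exists_forall_eq_dotProduct f.toLinearMap
  simp only [hd, smul_dotProduct, smul_eq_mul] at hfs hsf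
  have hud : 0 < u ⬝ᵥ d := by nlinarith [hfs u hu.1]
  refine ⟨(u ⬝ᵥ d)⁻¹ • d, ?_, fun v hv => ?_⟩
  · rw [dotProduct_smul, smul_eq_mul, inv_mul_cancel₀ hud.ne']
  · rw [dotProduct_smul, smul_eq_mul, inv_mul_lt_iff₀ hud, mul_comm]
    exact (hfs v (subset_closure hv)).trans hsf

end EndSet

section Calmness

variable {n : ℕ} {T : Type*} [TopologicalSpace T] {a : T → (Fin n → ℝ)}
  {p : Seminorm ℝ (Fin n → ℝ)} {bbar : C(T, ℝ)} {xbar : Fin n → ℝ}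

theorem convexHull_image_subset_endSet {D : Set T} (hD : D ∈ Dfam a bbar xbar) :
    convexHull ℝ (a '' D) ⊆ endSet (convexHull ℝ (a '' activeIdx a bbar xbar)) := by
  obtain ⟨hD_active, d, hd_eq, hd_lt⟩ := hD
  have hactive : ∀ v ∈ a '' activeIdx a bbar xbar, v ⬝ᵥ d ≤ 1 := by
    rintro _ ⟨t, ht, rfl⟩
    by_cases htD : t ∈ D
    · exact (hd_eq t htD).le
    · exact (hd_lt t ⟨ht, htD⟩).le
  have hplane : convexHull ℝ (a '' D) ⊆ {u | u ⬝ᵥ d = 1} :=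
    convexHull_min (image_subset_iff.2 hd_eq) (convex_hyperplane (isLinearMap_dotProduct_right d) 1)
  exact fun u hu => mem_endSet_of_dotProduct_eq_one
    (fun v hv => dotProduct_le_of_mem_closure_convexHull hactive hv)
    (subset_closure (convexHull_mono (image_mono hD_active) hu)) (hplane hu)

theorem iSup_Dfam_le_inv_dualDist0_endSet :
    ⨆ D ∈ Dfam a bbar xbar, (dualDist0 p (convexHull ℝ (a '' D)))⁻¹ ≤
      (dualDist0 p (endSet (convexHull ℝ (a '' activeIdx a bbar xbar))))⁻¹ :=
  iSup₂_le fun _ hD => ENNReal.inv_le_inv.2 (biInf_mono (convexHull_image_subset_endSet hD))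

theorem inv_dualDist0_face_le_iSup_Dfam {e : Fin n → ℝ}
    (he : ∀ u ∈ a '' activeIdx a bbar xbar, u ⬝ᵥ e ≤ 1) :
    (dualDist0 p (convexHull ℝ {u ∈ a '' activeIdx a bbar xbar | u ⬝ᵥ e = 1}))⁻¹ ≤
      ⨆ D ∈ Dfam a bbar xbar, (dualDist0 p (convexHull ℝ (a '' D)))⁻¹ := by
  have hface : {u ∈ a '' activeIdx a bbar xbar | u ⬝ᵥ e = 1} =
      a '' {t ∈ activeIdx a bbar xbar | a t ⬝ᵥ e = 1} :=
    (image_inter_preimage a (activeIdx a bbar xbar) {u | u ⬝ᵥ e = 1}).symm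
  have hmem : {t ∈ activeIdx a bbar xbar | a t ⬝ᵥ e = 1} ∈ Dfam a bbar xbar :=
    ⟨sep_subset _ _, e, fun _ ht => ht.2, fun t ht =>
      (he _ (mem_image_of_mem a ht.1)).lt_of_ne fun h => ht.2 ⟨ht.1, h⟩⟩
  rw [hface]
  exact le_iSup₂ (f := fun D (_ : D ∈ Dfam a bbar xbar) =>
    (dualDist0 p (convexHull ℝ (a '' D)))⁻¹) _ hmem

variable [CompactSpace T]

theorem isCompact_activeIdx (ha : Continuous a) (b : C(T, ℝ)) (x : Fin n → ℝ) :
    IsCompact (activeIdx a b x) :=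
  (isClosed_eq (ha.dotProduct continuous_const) b.continuous).isCompact

theorem pDist_negPolar_div_le_iSup_Dfam (ha : Continuous a) (hp : ∀ x, p x = 0 → x = 0)
    {d : Fin n → ℝ} {c : ℝ} (hc : 0 ≤ c)
    (hd : ∀ u ∈ a '' activeIdx a bbar xbar, u ⬝ᵥ d ≤ c) :
    pDist p d (negPolar (coneHull (a '' activeIdx a bbar xbar))) / ENNReal.ofReal c ≤
      ⨆ D ∈ Dfam a bbar xbar, (dualDist0 p (convexHull ℝ (a '' D)))⁻¹ := by
  refine le_of_forall_gt_imp_ge_of_dense fun r hr => ?_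
  obtain rfl | hr_top := eq_or_ne r ⊤
  · exact le_top
  lift r to ℝ≥0 using hr_top
  have hr_pos : (0 : ℝ) < r := NNReal.coe_pos.2 (ENNReal.coe_pos.1 (bot_le.trans_lt hr))
  have hS := (isCompact_activeIdx ha bbar xbar).image ha
  obtain ⟨k, hk, hkd⟩ := exists_forall_dotProduct_nonpos_and_mul_le hp hS (inv_pos.2 hr_pos)
    (fun e he => by
      rw [ENNReal.ofReal_inv_of_pos hr_pos, ENNReal.ofReal_coe_nnreal, ENNReal.inv_lt_iff_inv_lt]
      exact (inv_dualDist0_face_le_iSup_Dfam he).trans_lt hr) d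
  rw [inv_mul_le_iff₀ hr_pos] at hkd
  refine ENNReal.div_le_of_le_mul ((iInf₂_le k (mem_negPolar_coneHull.2 hk)).trans ?_)
  rw [← ENNReal.ofReal_coe_nnreal, ← ENNReal.ofReal_mul hr_pos.le]
  exact ENNReal.ofReal_le_ofReal (hkd.trans (by gcongr; exact maxViolation_le hS hc hd))

theorem dotProduct_sub_le_dist {b : C(T, ℝ)} {y : Fin n → ℝ} (hy : y ∈ feas a b) {u : Fin n → ℝ}
    (hu : u ∈ a '' activeIdx a bbar xbar) : u ⬝ᵥ (y - xbar) ≤ dist b bbar := by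
  obtain ⟨t, ht, rfl⟩ := hu
  calc a t ⬝ᵥ (y - xbar) = a t ⬝ᵥ y - bbar t := by
        rw [dotProduct_sub]
        exact congrArg _ ht
    _ ≤ b t - bbar t := sub_le_sub_right (hy t) _
    _ ≤ dist b bbar := (le_abs_self _).trans (b.dist_apply_le_dist t)

theorem clmF_le_iSup_Dfam (ha : Continuous a) (hp : ∀ x, p x = 0 → x = 0)
    (hxbar : xbar ∈ feas a bbar)
    (hreg : ∀ᶠ x in 𝓝 xbar,
      x - xbar ∈ negPolar (coneHull (a '' activeIdx a bbar xbar)) → x ∈ feas a bbar) :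
    clmF a p bbar xbar ≤ ⨆ D ∈ Dfam a bbar xbar, (dualDist0 p (convexHull ℝ (a '' D)))⁻¹ := by
  have hlocal := (continuous_snd.tendsto (bbar, xbar)).eventually
    (eventually_pDist_le_pDist_sub hp hxbar hreg)
  refine limsup_le_of_le (by isBoundedDefault) (eventually_inf_principal.2 ?_)
  filter_upwards [hlocal] with ⟨b, x⟩ hx hfeas
  calc pDist p x (feas a bbar) / edist b bbar
      ≤ pDist p (x - xbar) (negPolar (coneHull (a '' activeIdx a bbar xbar))) /
          ENNReal.ofReal (dist b bbar) := by
        rw [edist_dist]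
        exact ENNReal.div_le_div_right hx _
    _ ≤ _ := pDist_negPolar_div_le_iSup_Dfam ha hp dist_nonneg
        fun u hu => dotProduct_sub_le_dist hfeas hu

theorem ofReal_div_dualNorm_le_pDist_feas {u : Fin n → ℝ}
    (hu : u ∈ closure (convexHull ℝ (a '' activeIdx a bbar xbar))) (x : Fin n → ℝ) :
    ENNReal.ofReal (u ⬝ᵥ (x - xbar)) / dualNorm p u ≤ pDist p x (feas a bbar) := by
  refine le_iInf₂ fun y hy => le_trans ?_ (ofReal_dotProduct_div_dualNorm_le u (x - y))
  have hu_nonpos : u ⬝ᵥ (y - xbar) ≤ 0 := dotProduct_le_of_mem_closure_convexHull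
    (fun v hv => (dotProduct_sub_le_dist hy hv).trans_eq (dist_self bbar)) hu
  have hsplit : u ⬝ᵥ (x - y) = u ⬝ᵥ (x - xbar) - u ⬝ᵥ (y - xbar) := by
    rw [← dotProduct_sub, sub_sub_sub_cancel_right]
  gcongr
  linarith

theorem eventually_add_smul_mem_feas (ha : Continuous a) (hxbar : xbar ∈ feas a bbar)
    {d : Fin n → ℝ} {μ : ℝ} (hd : ∀ t ∈ activeIdx a bbar xbar, a t ⬝ᵥ d < μ) :
    ∀ᶠ ε : ℝ in 𝓝[>] 0, xbar + ε • d ∈ feas a (bbar + ContinuousMap.const T (ε * μ)) := by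
  filter_upwards [eventually_forall_add_mul_le (g := fun t => a t ⬝ᵥ xbar - bbar t) isCompact_univ
    ((ha.dotProduct continuous_const).sub bbar.continuous) (ha.dotProduct continuous_const)
    (fun t _ => sub_nonpos.2 (hxbar t)) (fun t _ ht => hd t (sub_eq_zero.1 ht))] with ε hε t
  change a t ⬝ᵥ (xbar + ε • d) ≤ bbar t + ε * μ
  rw [dotProduct_add, dotProduct_smul, smul_eq_mul]
  linarith [hε t (mem_univ t)]

theorem edist_add_const_le (b : C(T, ℝ)) {c : ℝ} (hc : 0 ≤ c) :
    edist (b + ContinuousMap.const T c) b ≤ ENNReal.ofReal c := by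
  rw [edist_dist, dist_self_add_left]
  exact ENNReal.ofReal_le_ofReal
    ((ContinuousMap.norm_le _ hc).2 fun _ => (Real.norm_of_nonneg hc).le)

theorem inv_mul_dualNorm_le_clmF (ha : Continuous a) (hxbar : xbar ∈ feas a bbar)
    {u d : Fin n → ℝ} (hu : u ∈ closure (convexHull ℝ (a '' activeIdx a bbar xbar)))
    (hud : u ⬝ᵥ d = 1) {μ : ℝ} (hd : ∀ t ∈ activeIdx a bbar xbar, a t ⬝ᵥ d < μ) :
    (ENNReal.ofReal μ * dualNorm p u)⁻¹ ≤ clmF a p bbar xbar := by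
  have hμ : 0 < μ := one_pos.trans_le <| hud.ge.trans <|
    dotProduct_le_of_mem_closure_convexHull (forall_mem_image.2 fun t ht => (hd t ht).le) hu
  set q : ℝ → C(T, ℝ) × (Fin n → ℝ) := fun ε =>
    (bbar + ContinuousMap.const T (ε * μ), xbar + ε • d)
  have hq : Tendsto q (𝓝[>] 0) (𝓝 (bbar, xbar)) := by
    have hcont : Continuous q := (continuous_const.add
      (ContinuousMap.continuous_const'.comp (by fun_prop))).prodMk (by fun_prop)
    refine (hcont.tendsto' 0 _ ?_).mono_left nhdsWithin_le_nhds
    ext <;> simp [q]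
  have hq_feas : ∀ᶠ ε in 𝓝[>] 0, (q ε).2 ∈ feas a (q ε).1 :=
    eventually_add_smul_mem_feas ha hxbar hd
  refine le_limsup_of_frequently_le' ((tendsto_inf.2 ⟨hq, tendsto_principal.2 hq_feas⟩).frequently
    (Eventually.frequently ?_))
  filter_upwards [self_mem_nhdsWithin] with ε (hε : 0 < ε)
  have hnum : ENNReal.ofReal ε / dualNorm p u ≤ pDist p (q ε).2 (feas a bbar) := by
    simpa [q, hud] using ofReal_div_dualNorm_le_pDist_feas (p := p) hu (xbar + ε • d)
  have hden : edist (q ε).1 bbar ≤ ENNReal.ofReal (ε * μ) :=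
    edist_add_const_le bbar (mul_pos hε hμ).le
  refine le_trans (le_of_eq ?_) (ENNReal.div_le_div hnum hden)
  rw [ENNReal.ofReal_mul hε.le, div_eq_mul_inv (ENNReal.ofReal ε), ENNReal.mul_div_mul_left _ _
    (ENNReal.ofReal_pos.2 hε).ne' ENNReal.ofReal_ne_top, ENNReal.mul_inv
    (Or.inl (ENNReal.ofReal_pos.2 hμ).ne') (Or.inl ENNReal.ofReal_ne_top), mul_comm, div_eq_mul_inv]

theorem inv_dualDist0_endSet_le_clmF (ha : Continuous a) (hxbar : xbar ∈ feas a bbar) :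
    (dualDist0 p (endSet (convexHull ℝ (a '' activeIdx a bbar xbar))))⁻¹ ≤ clmF a p bbar xbar := by
  simp only [dualDist0, ENNReal.inv_iInf]
  refine iSup₂_le fun u hu => ?_
  have hle : ∀ μ > (1 : ℝ), (ENNReal.ofReal μ * dualNorm p u)⁻¹ ≤ clmF a p bbar xbar := by
    intro μ hμ
    obtain ⟨d, hud, hd⟩ := exists_dotProduct_eq_one_of_mem_endSet (convex_convexHull ℝ _) hu hμ
    exact inv_mul_dualNorm_le_clmF ha hxbar hu.1 hud fun t ht =>
      hd _ (subset_convexHull ℝ _ (mem_image_of_mem a ht))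
  have hlim : Tendsto (fun μ : ℝ => (ENNReal.ofReal μ * dualNorm p u)⁻¹) (𝓝[>] 1)
      (𝓝 (ENNReal.ofReal 1 * dualNorm p u)⁻¹) :=
    tendsto_inv_iff.2 (ENNReal.Tendsto.mul_const
      (ENNReal.tendsto_ofReal (tendsto_id.mono_left nhdsWithin_le_nhds)) (by simp))
  rw [ENNReal.ofReal_one, one_mul] at hlim
  exact le_of_tendsto hlim (eventually_mem_nhdsWithin.mono hle)

theorem clmF_eq_endSet_eq_sup_Dfam_general (ha : Continuous a) (hp : ∀ x, p x = 0 → x = 0)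
    (hxbar : xbar ∈ feas a bbar)
    (hreg : ∀ᶠ x in 𝓝 xbar,
      x - xbar ∈ negPolar (coneHull (a '' activeIdx a bbar xbar)) → x ∈ feas a bbar) :
    clmF a p bbar xbar
        = (dualDist0 p (endSet (convexHull ℝ (a '' activeIdx a bbar xbar))))⁻¹ ∧
    clmF a p bbar xbar
        = ⨆ D ∈ Dfam a bbar xbar, (dualDist0 p (convexHull ℝ (a '' D)))⁻¹ := by
  have hclm_le := clmF_le_iSup_Dfam ha hp hxbar hreg
  have hle_end := iSup_Dfam_le_inv_dualDist0_endSet (a := a) (p := p) (bbar := bbar) (xbar := xbar)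
  have hend_le := inv_dualDist0_endSet_le_clmF (p := p) ha hxbar
  exact ⟨(hclm_le.trans hle_end).antisymm hend_le, hclm_le.antisymm (hle_end.trans hend_le)⟩

end Calmness

/-- Theorem `Th_LiMengYan`, Li–Meng–Yang. Let `b̄ ∈ dom F` and
`x̄ ∈ F(b̄)` with `f_{b̄}(x̄) = 0`, and assume the regularity condition: there is a
neighborhood `W` of `x̄` with `F(b̄) ∩ W = (x̄ + A(x̄)°) ∩ W`. Then
`clm F(b̄,x̄) = d_*(0ₙ, end conv{a_t : t ∈ T(x̄)})⁻¹
            = sup_{D ∈ 𝒟(x̄)} d_*(0ₙ, conv{a_t : t ∈ D})⁻¹`. -/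
theorem clmF_eq_endSet_eq_sup_Dfam
    {n : ℕ} {T : Type*} [MetricSpace T] [CompactSpace T]
    (a : T → (Fin n → ℝ)) (ha : Continuous a)
    (p : Seminorm ℝ (Fin n → ℝ)) (hp : ∀ x, p x = 0 → x = 0)
    (bbar : C(T, ℝ)) (hdom : (feas a bbar).Nonempty)
    (xbar : Fin n → ℝ) (hxbar : xbar ∈ feas a bbar)
    (hf0 : fSup a bbar xbar = 0)
    (hreg : ∃ W ∈ 𝓝 xbar,
      feas a bbar ∩ W =
        ((fun u => xbar + u) '' negPolar (coneHull (a '' activeIdx a bbar xbar))) ∩ W) :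
    clmF a p bbar xbar
        = (dualDist0 p (endSet (convexHull ℝ (a '' activeIdx a bbar xbar))))⁻¹ ∧
    clmF a p bbar xbar
        = ⨆ D ∈ Dfam a bbar xbar, (dualDist0 p (convexHull ℝ (a '' D)))⁻¹ := by
  obtain ⟨W, hW, hfeas⟩ := hreg
  refine clmF_eq_endSet_eq_sup_Dfam_general ha hp hxbar ?_
  filter_upwards [hW] with x hxW hx
  exact (hfeas.ge ⟨⟨x - xbar, hx, add_sub_cancel xbar x⟩, hxW⟩).1
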